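/- Let e ≥ 2 be even and let f : F_q → F_p belong to the class RF with sign ε. If ε(η_0(−1))^{e/2} = 1, then the code C_f' generated by the rows of [I_{e+2} | G_2] has length p^e + e + 2, dimension e + 2, and minimum distance p^e − p^{e−1} − (p−1)p^{e/2−1} + 2. If ε(η_0(−1))^{e/2} = −1, then C_f' has length p^e + e + 2, dimension e + 2, and minimum distance p^e − p^{e−1} − p^{e/2−1} + 1. In both cases, the dual (C_f')^⊥ has length p^e + e + 2, dimension p^e, and minimum distance 3. -/

import Mathlib

open scoped Classical

noncomputable section

/-- The complex primitive `p`-th root of unity `ζ_p = exp(2πi/p)`. -/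
def zetapc (p : ℕ) : ℂ := Complex.exp (2 * Real.pi * Complex.I / p)

/-- `√p* = i^{((p-1)/2)²} √p`, a square root of `p* = (-1)^{(p-1)/2} p`. -/
def sqrtpstar (p : ℕ) : ℂ := Complex.I ^ (((p - 1) / 2) ^ 2) * (Real.sqrt p : ℂ)

/-- The quadratic character of a finite field: `1` on nonzero squares, `-1` on
nonsquares, `0` at `0`. -/
def qchar (F : Type*) [MonoidWithZero F] : F → ℤ :=
  fun y => if y = 0 then 0 else if IsSquare y then 1 else -1

/-- `f : F_q → F_p` belongs to the class `RF` of weakly regular bent functions,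
with sign `ε` and dual `fstar`. -/
structure IsRF (p e : ℕ) (Fq : Type*) [Field Fq] [Fintype Fq] [Algebra (ZMod p) Fq]
    (f : Fq → ZMod p) (ε : ℤ) (fstar : Fq → ZMod p) : Prop where
  sign : ε = 1 ∨ ε = -1
  map_zero : f 0 = 0
  hom : ∃ h : ℕ, Even h ∧ 0 < h ∧ Nat.gcd (h - 1) (p - 1) = 1 ∧
    ∀ a : ZMod p, a ≠ 0 → ∀ x : Fq,
      f (algebraMap (ZMod p) Fq a * x) = a ^ h * f x
  walsh : ∀ β : Fq,
    (∑ x : Fq, zetapc p ^ (f x - Algebra.trace (ZMod p) Fq (β * x)).val)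
      = (ε : ℂ) * sqrtpstar p ^ e * zetapc p ^ (fstar β).val

/-- The dual code under the standard inner product. -/
def dualCode {ι F : Type*} [Fintype ι] [CommRing F] (C : Set (ι → F)) : Set (ι → F) :=
  {u | ∀ v ∈ C, ∑ i, u i * v i = 0}

/-- `d` is the minimum distance of the code `C`: the smallest Hamming weight of a
nonzero codeword. -/
def IsMinDist {ι F : Type*} [Fintype ι] [CommRing F] (C : Set (ι → F)) (d : ℕ) : Prop :=
  (∃ c ∈ C, c ≠ 0 ∧ hammingNorm c = d) ∧ ∀ c ∈ C, c ≠ 0 → d ≤ hammingNorm c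

/-- The code generated by the rows of the block matrix `[I_k | G]`. -/
def genCode {ι F : Type*} [Fintype ι] [CommRing F] (k : ℕ) (G : Fin k → ι → F) :
    Set ((Fin k ⊕ ι) → F) :=
  {w | ∃ v : Fin k → F, w = Sum.elim v fun d => ∑ j, v j * G j d}

/-!
Moving a Walsh value `A ζ ^ j₀` to the other side gives a vanishing integer combination of the
powers of `ζ`, whose coefficients must all be equal. Hence `f - φ` takes every value equally often,
for each linear functional `φ`, except for the value `fdual φ`, whose fibre differs by `A`. Up to
scaling, a codeword of `[I | G₂]` involving the row `f + 1` vanishes on a fibre of some `f - φ`, so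
its weight is one of two numbers; the other codewords are affine and heavier.

The sign of `A` decides whether the exceptional weight is the smaller one. If it is, then
`fdual 0 = 0` rules out that a message of weight one attains it, whereas `(-1, 1, 0)` does; if it is
not, the message `(0, 1, 0)` attains the other weight, again because `fdual 0 = 0`. That value is
forced by parity: as `f` is even, its fibres over nonzero values have even size, whereas its
exceptional fibre has odd size.
-/

open Matrix Module

section HammingNorm

variable {F ι κ : Type*} [Zero F] [DecidableEq F] [Fintype ι] [Fintype κ]

theorem hammingNorm_sumElim (v : κ → F) (w : ι → F) :
    hammingNorm (Sum.elim v w) = hammingNorm v + hammingNorm w := by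
  simp only [hammingNorm, Finset.card_filter, Fintype.sum_sum_type, Sum.elim_inl, Sum.elim_inr]
  rfl

theorem hammingNorm_add_card_zeros (w : ι → F) :
    hammingNorm w + Finset.card {i | w i = 0} = Fintype.card ι := by
  rw [hammingNorm, add_comm, Finset.card_filter_add_card_filter_not, Finset.card_univ]

theorem hammingNorm_vecCons {k : ℕ} (a : F) (v : Fin k → F) :
    hammingNorm (vecCons a v) = (if a = 0 then 0 else 1) + hammingNorm v := by
  simp only [hammingNorm, Finset.card_filter, Fin.sum_univ_succ, cons_val_zero, cons_val_succ,
    ne_eq, ite_not]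
  rfl

end HammingNorm

section SystematicCode

variable {F ι : Type*} [CommRing F] [Fintype ι] {k : ℕ}

theorem isMinDist_range_iff [DecidableEq F] {α : Type*} [Zero α] {E : α → ι → F}
    (hE : ∀ a, E a = 0 ↔ a = 0) {d : ℕ} :
    IsMinDist (Set.range E) d ↔
      (∃ a, a ≠ 0 ∧ hammingNorm (E a) = d) ∧ ∀ a, a ≠ 0 → d ≤ hammingNorm (E a) := by
  simp only [IsMinDist, Set.exists_range_iff, Set.forall_mem_range, ne_eq, hE]
  -- `IsMinDist` was stated with the classical decidability instance.
  convert Iff.rfl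

theorem genCode_eq_range (G : Matrix (Fin k) ι F) :
    genCode k G = Set.range fun v : Fin k → F => Sum.elim v (v ᵥ* G) := by
  ext w
  exact exists_congr fun v => eq_comm

theorem mem_dualCode_genCode_iff {G : Matrix (Fin k) ι F} {u : Fin k ⊕ ι → F} :
    u ∈ dualCode (genCode k G) ↔ u ∘ Sum.inl = -(G *ᵥ (u ∘ Sum.inr)) := by
  have inner_codeword (v : Fin k → F) :
      ∑ i, u i * Sum.elim v (v ᵥ* G) i = (u ∘ Sum.inl + G *ᵥ (u ∘ Sum.inr)) ⬝ᵥ v := by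
    rw [Fintype.sum_sum_type, add_dotProduct, dotProduct_comm (G *ᵥ _), dotProduct_mulVec,
      dotProduct_comm (v ᵥ* G)]
    rfl
  rw [eq_neg_iff_add_eq_zero, ← dotProduct_eq_zero_iff, genCode_eq_range]
  exact Set.forall_mem_range.trans (forall_congr' fun v => by rw [inner_codeword])

theorem dualCode_genCode (G : Matrix (Fin k) ι F) :
    dualCode (genCode k G) = Set.range fun w : ι → F => Sum.elim (-(G *ᵥ w)) w := by
  ext u
  rw [mem_dualCode_genCode_iff]
  constructor
  · intro h
    refine ⟨u ∘ Sum.inr, ?_⟩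
    simp only [← h, Sum.elim_comp_inl_inr]
  · rintro ⟨w, rfl⟩
    rfl

theorem card_genCode (G : Matrix (Fin k) ι F) : Nat.card (genCode k G) = Nat.card F ^ k := by
  rw [genCode_eq_range, Nat.card_range_of_injective fun v v' h => (Sum.elim_eq_iff.1 h).1,
    Nat.card_fun, Nat.card_fin]

theorem card_dualCode_genCode (G : Matrix (Fin k) ι F) :
    Nat.card (dualCode (genCode k G)) = Nat.card F ^ Fintype.card ι := by
  rw [dualCode_genCode, Nat.card_range_of_injective fun w w' h => (Sum.elim_eq_iff.1 h).2,
    Nat.card_fun, Nat.card_eq_fintype_card (α := ι)]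

theorem isMinDist_genCode_iff [DecidableEq F] {G : Matrix (Fin k) ι F} {d : ℕ} :
    IsMinDist (genCode k G) d ↔
      (∃ v, v ≠ 0 ∧ hammingNorm v + hammingNorm (v ᵥ* G) = d) ∧
        ∀ v, v ≠ 0 → d ≤ hammingNorm v + hammingNorm (v ᵥ* G) := by
  simp only [genCode_eq_range, ← hammingNorm_sumElim]
  refine isMinDist_range_iff fun v => ⟨fun h => funext fun i => congrFun h (Sum.inl i), ?_⟩
  rintro rfl
  rw [zero_vecMul, Sum.elim_zero_zero]

theorem isMinDist_dualCode_genCode_iff [DecidableEq F] {G : Matrix (Fin k) ι F} {d : ℕ} :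
    IsMinDist (dualCode (genCode k G)) d ↔
      (∃ w, w ≠ 0 ∧ hammingNorm (G *ᵥ w) + hammingNorm w = d) ∧
        ∀ w, w ≠ 0 → d ≤ hammingNorm (G *ᵥ w) + hammingNorm w := by
  have hneg (w : ι → F) : hammingNorm (-(G *ᵥ w)) = hammingNorm (G *ᵥ w) := by
    simp only [hammingNorm, Pi.neg_apply, ne_eq, neg_eq_zero]
  simp only [dualCode_genCode, ← hneg, ← hammingNorm_sumElim]
  refine isMinDist_range_iff fun w => ⟨fun h => funext fun i => congrFun h (Sum.inr i), ?_⟩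
  rintro rfl
  rw [mulVec_zero, neg_zero, Sum.elim_zero_zero]

end SystematicCode

section DualDistance

variable {F ι : Type*} [Field F] [DecidableEq F] [Fintype ι] {k : ℕ}
  {G : Matrix (Fin k) ι F}

theorem mulVec_eq_sum_support (w : ι → F) :
    G *ᵥ w = ∑ i with w i ≠ 0, w i • G.col i := by
  rw [mulVec_eq_sum, Finset.sum_filter_of_ne]
  · simp only [op_smul_eq_smul]
    rfl
  · rintro i - hi h
    exact hi (by rw [h, zero_smul])

/-- A word of weight one in the dual of `[I | G]` would need a column of `G` of weight at most one,
and one supported on two columns would make them proportional. -/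
theorem three_le_hammingNorm_mulVec_add (hcol : ∀ i, 2 ≤ hammingNorm (G.col i))
    (hne : ∀ i j, ∀ a : F, G.col i = a • G.col j → i = j) {w : ι → F} (hw : w ≠ 0) :
    3 ≤ hammingNorm (G *ᵥ w) + hammingNorm w := by
  have hpos : 0 < hammingNorm w := hammingNorm_pos_iff.2 hw
  obtain hone | htwo | hthree : hammingNorm w = 1 ∨ hammingNorm w = 2 ∨ 3 ≤ hammingNorm w := by
    lia
  · obtain ⟨i, hi⟩ := Finset.card_eq_one.1 hone
    have hwi : w i ≠ 0 := by simpa using hi.ge (Finset.mem_singleton_self i)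
    have : hammingNorm (G *ᵥ w) = hammingNorm (G.col i) := by
      rw [mulVec_eq_sum_support, hi, Finset.sum_singleton,
        hammingNorm_smul fun _ => IsSMulRegular.of_ne_zero hwi]
    linarith [hcol i]
  · obtain ⟨i, j, hij, hsupp⟩ := Finset.card_eq_two.1 htwo
    have hwi : w i ≠ 0 := by simpa using hsupp.ge (Finset.mem_insert_self i {j})
    have : 0 < hammingNorm (G *ᵥ w) := by
      rw [hammingNorm_pos_iff, mulVec_eq_sum_support, hsupp, Finset.sum_pair hij]
      intro hsum
      refine hij (hne i j (-(w i)⁻¹ * w j) ?_)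
      rw [mul_smul, ← neg_eq_of_add_eq_zero_right hsum, neg_smul, smul_neg, neg_neg,
        inv_smul_smul₀ hwi]
    lia
  · lia

end DualDistance

section FiberCounts

theorem coeff_eq_of_sum_pow_val_eq_zero {K : Type*} [Field K] [CharZero K] {p : ℕ}
    [hp : Fact p.Prime] {ζ : K} (hζ : IsPrimitiveRoot ζ p) {c : ZMod p → ℤ}
    (hc : ∑ j, c j * ζ ^ j.val = 0) (i j : ZMod p) : c i = c j := by
  cases p with
  | zero => exact absurd rfl hp.out.ne_zero
  | succ n => exact (hζ.sum_eq_zero_iff_forall_eq_int hp.out c).1 hc i j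

/-- If `∑ ζ ^ g x = A ζ ^ j₀`, then the fibre sizes `#g⁻¹(j)`, lowered by `A` at `j = j₀`, are the
coefficients of a vanishing combination of the powers of `ζ`, hence all equal. -/
theorem prime_mul_card_fiber_of_sum_pow_eq {K α : Type*} [Field K] [CharZero K] [Fintype α]
    {p : ℕ} [Fact p.Prime] {ζ : K} (hζ : IsPrimitiveRoot ζ p) {g : α → ZMod p} {A : ℤ}
    {j₀ : ZMod p} (hg : ∑ x, ζ ^ (g x).val = A * ζ ^ j₀.val) (j : ZMod p) :
    (p : ℤ) * Finset.card {x | g x = j} =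
      Fintype.card α - A + if j = j₀ then p * A else 0 := by
  let c : ZMod p → ℤ := fun i => Finset.card {x | g x = i} - if i = j₀ then A else 0
  have sum_fibers : ∑ i, ((Finset.card {x | g x = i} : ℕ) : K) * ζ ^ i.val
      = ∑ x, ζ ^ (g x).val := by
    rw [← Finset.sum_fiberwise Finset.univ g]
    refine Finset.sum_congr rfl fun i _ => ?_
    rw [← nsmul_eq_mul, ← Finset.sum_const]
    refine Finset.sum_congr rfl fun x hx => ?_
    rw [(Finset.mem_filter.1 hx).2]
  have hc : ∑ i, (c i : K) * ζ ^ i.val = 0 := by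
    simp [c, sub_mul, Finset.sum_sub_distrib, sum_fibers, hg]
  have sum_c : ∑ i, c i = Fintype.card α - A := by
    have := Finset.card_eq_sum_card_fiberwise (s := (Finset.univ : Finset α))
      (t := (Finset.univ : Finset (ZMod p))) (f := g) (by simp)
    simp [c, Finset.sum_sub_distrib, ← Finset.card_univ (α := α), this]
  have : (p : ℤ) * c j = Fintype.card α - A := by
    rw [← sum_c, Finset.sum_congr rfl fun i _ => coeff_eq_of_sum_pow_val_eq_zero hζ hc i j]
    simp [ZMod.card]
  rw [← this]
  simp only [c]
  split_ifs <;> ring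

theorem card_mul_card_fiber_of_ne_zero {K V : Type*} [Field K] [Fintype K] [DecidableEq K]
    [AddCommGroup V] [Module K V] [Fintype V] {φ : Dual K V} (hφ : φ ≠ 0) (c : K) :
    Fintype.card K * Finset.card {x | φ x = c} = Fintype.card V := by
  have hsurj : Function.Surjective φ := LinearMap.surjective hφ
  have hconst (c' : K) : Finset.card {x | φ x = c'} = Finset.card {x | φ x = c} :=
    AddMonoidHom.card_fiber_eq_of_mem_range φ (hsurj c') (hsurj c)
  have := Finset.card_eq_sum_card_fiberwise (s := (Finset.univ : Finset V))
    (t := (Finset.univ : Finset K)) (f := φ) (by simp)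
  rw [← Finset.card_univ (α := V), this, Finset.sum_congr rfl fun c' _ => hconst c']
  simp

theorem card_mul_card_zeros_affine_le {K V : Type*} [Field K] [Fintype K] [DecidableEq K]
    [AddCommGroup V] [Module K V] [Fintype V] {a : K} {φ : Dual K V} (h : a ≠ 0 ∨ φ ≠ 0) :
    Fintype.card K * Finset.card {x | a + φ x = 0} ≤ Fintype.card V := by
  obtain rfl | hφ := eq_or_ne φ 0
  · simp [h.resolve_right (not_not.2 rfl)]
  · simp only [add_eq_zero_iff_neg_eq, eq_comm (a := -a)]
    exact (card_mul_card_fiber_of_ne_zero hφ (-a)).le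

theorem even_card_fiber_of_even {V β : Type*} [AddGroup V] [Fintype V] [DecidableEq β]
    (hV : ∀ x : V, -x = x → x = 0) {g : V → β} (hg : Function.Even g) {j : β} (hj : g 0 ≠ j) :
    Even (Finset.card {x | g x = j}) := by
  rw [even_iff_two_dvd, ← ZMod.natCast_eq_zero_iff, Finset.card_eq_sum_ones, Nat.cast_sum]
  refine Finset.sum_involution (fun x _ => -x) (fun _ _ => by decide) (fun x hx _ hneg => ?_)
    (fun x hx => ?_) fun x _ => neg_neg x
  · rw [Finset.mem_filter, hV x hneg] at hx
    exact hj hx.2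
  · simpa only [Finset.mem_filter_univ, hg x] using hx

end FiberCounts

section WeaklyRegularBent

variable {p : ℕ} {V : Type*} [AddCommGroup V] [Fintype V]

/-- The function `f` on a finite `𝔽_p`-space is weakly regular bent with amplitude `A` and dual
`fdual`: each of its Walsh values is `A` times a `p`-th root of unity. Frequencies are linear
functionals, so that no identification of `V` with its dual space is needed. -/
def IsWeaklyRegularBent [Module (ZMod p) V] (f : V → ZMod p) (A : ℤ)
    (fdual : Dual (ZMod p) V → ZMod p) : Prop :=
  ∀ φ : Dual (ZMod p) V,
    ∑ x, zetapc p ^ (f x - φ x).val = A * zetapc p ^ (fdual φ).val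

namespace IsWeaklyRegularBent

variable [Fact p.Prime] [Module (ZMod p) V] {f : V → ZMod p} {fdual : Dual (ZMod p) V → ZMod p}

theorem prime_mul_card_fiber {A : ℤ} (hf : IsWeaklyRegularBent f A fdual)
    (φ : Dual (ZMod p) V) (j : ZMod p) :
    (p : ℤ) * Finset.card {x | f x - φ x = j} =
      Fintype.card V - A + if j = fdual φ then p * A else 0 :=
  prime_mul_card_fiber_of_sum_pow_eq
    (Complex.isPrimitiveRoot_exp p (Fact.out : p.Prime).ne_zero) (hf φ) j

theorem dual_zero {A : ℤ} (hf : IsWeaklyRegularBent f A fdual) (hp : Odd p) (hA : Odd A)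
    (heven : Function.Even f) : fdual 0 = f 0 := by
  by_contra! hne
  have hV : Odd (Fintype.card V : ℤ) := by
    rw [Module.card_eq_pow_finrank (K := ZMod p), ZMod.card]
    exact_mod_cast hp.pow
  have torsion (x : V) (hx : -x = x) : x = 0 := by
    by_contra hx0
    refine ZMod.ne_neg_self hp one_ne_zero (smul_left_injective (ZMod p) hx0 ?_)
    simp only [one_smul, neg_smul, hx]
  have hfiber : Even (p * Finset.card {x | f x = fdual 0} : ℤ) :=
    ((even_card_fiber_of_even torsion heven hne.symm).natCast).mul_left _
  have hcount := hf.prime_mul_card_fiber 0 (fdual 0)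
  simp only [LinearMap.zero_apply, sub_zero, if_true] at hcount
  rw [hcount] at hfiber
  refine Int.not_even_iff_odd.2 ((hV.sub_odd hA).add_odd (Odd.mul ?_ hA)) hfiber
  exact_mod_cast hp

theorem card_zeros_affine {q : ℕ} {t : ℤ} (hf : IsWeaklyRegularBent f (p * t) fdual)
    (hV : Fintype.card V = p * q) (a : ZMod p) {c : ZMod p} (hc : c ≠ 0) (φ : Dual (ZMod p) V) :
    (Finset.card {x | a + c * (f x + 1) + φ x = 0} : ℤ) =
      q - t + if -(a + c) / c = fdual (-c⁻¹ • φ) then p * t else 0 := by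
  have hset : ∀ x, a + c * (f x + 1) + φ x = 0 ↔ f x - (-c⁻¹ • φ) x = -(a + c) / c := by
    intro x
    rw [eq_div_iff hc, LinearMap.smul_apply, smul_eq_mul]
    constructor <;> intro h
    · field_simp
      linear_combination h
    · field_simp at h
      linear_combination h
  have hp : (p : ℤ) ≠ 0 := by exact_mod_cast (Fact.out : p.Prime).ne_zero
  refine mul_left_cancel₀ hp ?_
  simp only [hset]
  rw [hf.prime_mul_card_fiber, hV]
  push_cast
  split_ifs <;> ring

end IsWeaklyRegularBent

/-- The generator matrix with rows `1`, `f + 1` and the linear functionals `φ i`; the matrix `G₂` of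
the paper is the case where the `φ i` are the maps `x ↦ Tr(β ^ i * x)`. -/
def bentMatrix {F V : Type*} [Field F] [AddCommGroup V] [Module F V] {e : ℕ} (f : V → F)
    (φ : Fin e → Dual F V) : Matrix (Fin (e + 2)) V F :=
  vecCons 1 (vecCons (f + 1) fun i => φ i)

theorem exists_eq_vecCons_vecCons {α : Type*} {k : ℕ} (v : Fin (k + 2) → α) :
    ∃ a c u, v = vecCons a (vecCons c u) :=
  ⟨vecHead v, vecHead (vecTail v), vecTail (vecTail v), by simp only [cons_head_tail]⟩

section BentMatrix

variable {F V : Type*} [Field F] [AddCommGroup V] [Module F V] {e : ℕ} {f : V → F}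

theorem vecMul_bentMatrix_apply (b : Basis (Fin e) F (Dual F V)) (a c : F) (u : Fin e → F)
    (x : V) :
    (vecCons a (vecCons c u) ᵥ* bentMatrix f b) x =
      a + c * (f x + 1) + b.equivFun.symm u x := by
  simp [vecMul, dotProduct, Fin.sum_univ_succ, bentMatrix, add_assoc, b.equivFun_symm_apply]

theorem eq_of_forall_dual_basis_apply_eq {ι : Type*} (b : Basis ι F (Dual F V)) {x y : V}
    (h : ∀ i, b i x = b i y) : x = y :=
  eval_apply_injective F (b.ext h : Dual.eval F V x = Dual.eval F V y)

theorem le_hammingNorm_vecMul_bentMatrix [Fintype F] [DecidableEq F] [Fintype V]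
    (b : Basis (Fin e) F (Dual F V)) {q : ℕ} (hV : Fintype.card V = Fintype.card F * q) {a : F}
    {u : Fin e → F} (hv : vecCons a (vecCons 0 u) ≠ 0) :
    Fintype.card F * q ≤ hammingNorm (vecCons a (vecCons 0 u) ᵥ* bentMatrix f b) + q := by
  have h : a ≠ 0 ∨ u ≠ 0 := by
    contrapose! hv
    simp [hv]
  have hsum := hammingNorm_add_card_zeros (vecCons a (vecCons 0 u) ᵥ* bentMatrix f b)
  simp only [vecMul_bentMatrix_apply, hV, zero_mul, add_zero] at hsum
  have hzeros := card_mul_card_zeros_affine_le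
    (h.imp_right (b.equivFun.symm.map_ne_zero_iff (x := u)).2)
  rw [hV] at hzeros
  have := Nat.le_of_mul_le_mul_left hzeros Fintype.card_pos
  lia

theorem isMinDist_dualCode_bentMatrix [Fintype V] {φ : Fin e → Dual F V}
    (hφ : ∀ x y, (∀ i, φ i x = φ i y) → x = y) (hf : f 0 = 0) :
    IsMinDist (dualCode (genCode (e + 2) (bentMatrix f φ))) 3 := by
  rw [isMinDist_dualCode_genCode_iff]
  have col_eq (x : V) : (bentMatrix f φ).col x = vecCons 1 (vecCons (f x + 1) fun i => φ i x) := by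
    ext i
    refine Fin.cases rfl (fun i => Fin.cases rfl (fun i => rfl) i) i
  have hammingNorm_col (x : V) : hammingNorm ((bentMatrix f φ).col x) =
      1 + ((if f x + 1 = 0 then 0 else 1) + hammingNorm fun i => φ i x) := by
    rw [col_eq, hammingNorm_vecCons, hammingNorm_vecCons, if_neg one_ne_zero]
  constructor
  · refine ⟨Pi.single 0 1, Pi.single_ne_zero_iff.2 one_ne_zero, ?_⟩
    have hsingle : hammingNorm (Pi.single 0 1 : V → F) = 1 :=
      Finset.card_eq_one.2 ⟨0, by ext x; simp [Pi.single_apply]⟩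
    have hzero : (fun i => φ i 0) = 0 := funext fun i => map_zero (φ i)
    rw [mulVec_single_one, hammingNorm_col, hzero, hammingNorm_zero, hf, zero_add,
      if_neg one_ne_zero, hsingle]
  · refine fun w hw => three_le_hammingNorm_mulVec_add (fun x => ?_) (fun x y a hxy => ?_) hw
    · rw [hammingNorm_col]
      obtain rfl | hx := eq_or_ne x 0
      · rw [hf, zero_add, if_neg one_ne_zero]
        lia
      · have : 0 < hammingNorm fun i => φ i x := hammingNorm_pos_iff.2 fun h =>
          hx (hφ x 0 fun i => by rw [map_zero]; exact congrFun h i)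
        lia
    · rw [col_eq, col_eq] at hxy
      have ha : a = 1 := by simpa using (congrFun hxy 0).symm
      exact hφ x y fun i => by simpa [ha] using congrFun hxy i.succ.succ

end BentMatrix

namespace IsWeaklyRegularBent

variable [Fact p.Prime] [Module (ZMod p) V] {f : V → ZMod p} {fdual : Dual (ZMod p) V → ZMod p}
  {e q : ℕ} (b : Basis (Fin e) (ZMod p) (Dual (ZMod p) V))

theorem hammingNorm_vecMul_bentMatrix {t : ℤ} (hf : IsWeaklyRegularBent f (p * t) fdual)
    (hV : Fintype.card V = p * q) (a : ZMod p) {c : ZMod p} (hc : c ≠ 0) (u : Fin e → ZMod p) :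
    (hammingNorm (vecCons a (vecCons c u) ᵥ* bentMatrix f b) : ℤ) =
      p * q - q + t - if -(a + c) / c = fdual (-c⁻¹ • b.equivFun.symm u) then p * t else 0 := by
  have hsum := hammingNorm_add_card_zeros (vecCons a (vecCons c u) ᵥ* bentMatrix f b)
  simp only [vecMul_bentMatrix_apply, hV] at hsum
  have hzeros := hf.card_zeros_affine hV a hc (b.equivFun.symm u)
  zify at hsum
  linarith

theorem isMinDist_of_pos {t : ℕ} (hf : IsWeaklyRegularBent f (p * t) fdual) (ht : 0 < t)
    (hV : Fintype.card V = p * q) (hdual : fdual 0 = 0) :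
    IsMinDist (genCode (e + 2) (bentMatrix f b)) (p * q - q - (p - 1) * t + 2) := by
  have hp : 2 ≤ p := (Fact.out : p.Prime).two_le
  have hq : 0 < q := Nat.pos_of_ne_zero fun h =>
    Fintype.card_ne_zero (hV.trans (by rw [h, mul_zero]))
  have hpq : 2 * q ≤ p * q := Nat.mul_le_mul_right q hp
  have hpt : 2 * t ≤ p * t := Nat.mul_le_mul_right t hp
  rw [isMinDist_genCode_iff, Nat.sub_mul, one_mul]
  constructor
  · have hw := hammingNorm_vecMul_bentMatrix b hf hV (-1) one_ne_zero 0
    refine ⟨vecCons (-1) (vecCons 1 0), fun h => by simpa using congrFun h 1, ?_⟩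
    rw [if_pos (by simp [hdual])] at hw
    simp only [hammingNorm_vecCons, hammingNorm_zero, neg_eq_zero, one_ne_zero, if_false]
    lia
  · intro v hv
    obtain ⟨a, c, u, rfl⟩ := exists_eq_vecCons_vecCons v
    have hpos : 0 < hammingNorm (vecCons a (vecCons c u)) := hammingNorm_pos_iff.2 hv
    obtain rfl | hc := eq_or_ne c 0
    · have hw := le_hammingNorm_vecMul_bentMatrix (f := f) b (by rwa [ZMod.card]) hv
      rw [ZMod.card] at hw
      lia
    · have hw := hammingNorm_vecMul_bentMatrix b hf hV a hc u
      split_ifs at hw with h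
      · have : 2 ≤ hammingNorm (vecCons a (vecCons c u)) := by
          rw [hammingNorm_vecCons, hammingNorm_vecCons, if_neg hc]
          by_contra! hlt
          obtain ⟨rfl, hu⟩ : a = 0 ∧ hammingNorm u = 0 := by
            split_ifs at hlt with ha
            · exact ⟨ha, by lia⟩
            · lia
          rw [hammingNorm_eq_zero] at hu
          simp [hu, hdual, hc] at h
        lia
      · lia

theorem isMinDist_of_neg {t : ℕ} (hf : IsWeaklyRegularBent f (p * -t) fdual)
    (hV : Fintype.card V = p * q) (hdual : fdual 0 = 0) :
    IsMinDist (genCode (e + 2) (bentMatrix f b)) (p * q - q - t + 1) := by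
  rw [isMinDist_genCode_iff]
  constructor
  · have hw := hammingNorm_vecMul_bentMatrix b hf hV 0 one_ne_zero 0
    refine ⟨vecCons 0 (vecCons 1 0), fun h => by simpa using congrFun h 1, ?_⟩
    rw [if_neg (by simp [hdual])] at hw
    simp only [hammingNorm_vecCons, hammingNorm_zero, one_ne_zero, if_false, if_true]
    lia
  · intro v hv
    obtain ⟨a, c, u, rfl⟩ := exists_eq_vecCons_vecCons v
    have hpos : 0 < hammingNorm (vecCons a (vecCons c u)) := hammingNorm_pos_iff.2 hv
    obtain rfl | hc := eq_or_ne c 0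
    · have hw := le_hammingNorm_vecMul_bentMatrix (f := f) b (by rwa [ZMod.card]) hv
      rw [ZMod.card] at hw
      lia
    · have hw := hammingNorm_vecMul_bentMatrix b hf hV a hc u
      split_ifs at hw with h
      · have : (0 : ℤ) ≤ p * t := by positivity
        lia
      · lia

end IsWeaklyRegularBent

end WeaklyRegularBent

section TraceDual

/-- The identification of a finite separable extension with its dual space by the trace form,
translating the Walsh frequencies `β` of the paper into linear functionals. -/
def traceDual (K L : Type*) [Field K] [Field L] [Algebra K L] [FiniteDimensional K L]
    [Algebra.IsSeparable K L] : L ≃ₗ[K] Dual K L :=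
  (Algebra.traceForm K L).toDual (traceForm_nondegenerate K L)

variable {K L : Type*} [Field K] [Field L] [Algebra K L] [FiniteDimensional K L]
  [Algebra.IsSeparable K L]

theorem traceDual_apply (β x : L) : traceDual K L β x = Algebra.trace K L (β * x) :=
  rfl

theorem exists_basis_dual_trace_pow {e : ℕ} (hL : finrank K L = e) {β : L}
    (hβ : IntermediateField.adjoin K {β} = ⊤) :
    ∃ b : Basis (Fin e) K (Dual K L), ∀ i x, b i x = Algebra.trace K L (β ^ (i : ℕ) * x) := by
  let pb := PowerBasis.ofAdjoinEqTop (.of_finite K β)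
    (Algebra.adjoin_eq_top_of_primitive_element (.of_finite K β) hβ)
  have hdim : pb.dim = e := pb.finrank.symm.trans hL
  have hpb (i : Fin e) : pb.basis.reindex (finCongr hdim) i = β ^ (i : ℕ) := by
    simp only [Basis.reindex_apply, PowerBasis.basis_eq_pow, pb, PowerBasis.ofAdjoinEqTop_gen]
    rfl
  exact ⟨(pb.basis.reindex (finCongr hdim)).map (traceDual K L), fun i x => by
    rw [Basis.map_apply, hpb, traceDual_apply]⟩

end TraceDual

theorem adjoin_eq_top_of_forall_exists_pow_eq (K : Type*) {L : Type*} [Field K] [Field L]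
    [Algebra K L] {β : L} (hβ : ∀ y : L, y ≠ 0 → ∃ k : ℕ, β ^ k = y) :
    IntermediateField.adjoin K {β} = ⊤ := by
  refine eq_top_iff.2 fun y _ => ?_
  obtain rfl | hy := eq_or_ne y 0
  · exact zero_mem _
  · obtain ⟨k, rfl⟩ := hβ y hy
    exact pow_mem (IntermediateField.mem_adjoin_simple_self K β) k

section RF

variable {p e : ℕ} [Fact p.Prime]

theorem sqrtpstar_sq (hodd : Odd p) : sqrtpstar p ^ 2 = (qchar (ZMod p) (-1) : ℂ) * p := by
  have hI : (Complex.I ^ ((p - 1) / 2) ^ 2) ^ 2 = (qchar (ZMod p) (-1) : ℂ) := by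
    rw [← pow_mul, mul_comm, pow_mul, Complex.I_sq, qchar, if_neg (neg_ne_zero.2 one_ne_zero),
      ZMod.exists_sq_eq_neg_one_iff]
    obtain ⟨k, rfl⟩ := hodd
    rw [Nat.add_sub_cancel, Nat.mul_div_cancel_left k two_pos]
    split_ifs with h
    · rw [(Nat.even_pow.2 ⟨?_, two_ne_zero⟩ : Even (k ^ 2)).neg_one_pow, Int.cast_one]
      rw [Nat.even_iff]
      lia
    · rw [(Odd.pow ?_ : Odd (k ^ 2)).neg_one_pow, Int.cast_neg, Int.cast_one]
      rw [Nat.odd_iff]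
      lia
  rw [sqrtpstar, mul_pow, hI, ← Complex.ofReal_pow, Real.sq_sqrt (Nat.cast_nonneg p),
    Complex.ofReal_natCast]

variable {Fq : Type*} [Field Fq] [Fintype Fq] [Algebra (ZMod p) Fq] {f : Fq → ZMod p} {ε : ℤ}
  {fstar : Fq → ZMod p}

theorem IsRF.even (hf : IsRF p e Fq f ε fstar) : Function.Even f := by
  obtain ⟨h, hh, -, -, hom⟩ := hf.hom
  intro x
  simpa [hh.neg_one_pow] using hom (-1) (neg_ne_zero.2 one_ne_zero) x

theorem IsRF.isWeaklyRegularBent (hodd : Odd p) (he : Even e) (hf : IsRF p e Fq f ε fstar) :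
    IsWeaklyRegularBent f (ε * qchar (ZMod p) (-1) ^ (e / 2) * p ^ (e / 2))
      fun φ => fstar ((traceDual (ZMod p) Fq).symm φ) := by
  have hamp : sqrtpstar p ^ e = ((qchar (ZMod p) (-1) ^ (e / 2) * p ^ (e / 2) : ℤ) : ℂ) := by
    obtain ⟨k, rfl⟩ := he.two_dvd
    rw [Nat.mul_div_cancel_left k two_pos, pow_mul, sqrtpstar_sq hodd, mul_pow]
    push_cast
    rfl
  intro φ
  obtain ⟨β, rfl⟩ := (traceDual (ZMod p) Fq).surjective φ
  simp only [traceDual_apply, LinearEquiv.symm_apply_apply]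
  rw [hf.walsh, hamp, mul_assoc ε, Int.cast_mul ε]

end RF

theorem stmt17_general {p e : ℕ} [Fact p.Prime] (hodd : Odd p) (he : 2 ≤ e)
    {V : Type*} [AddCommGroup V] [Module (ZMod p) V] [Fintype V]
    (b : Basis (Fin e) (ZMod p) (Dual (ZMod p) V)) {f : V → ZMod p} (hf0 : f 0 = 0)
    (hf : Function.Even f) {s : ℤ} {fdual : Dual (ZMod p) V → ZMod p}
    (hbent : IsWeaklyRegularBent f (s * p ^ (e / 2)) fdual) :
    Fintype.card (Fin (e + 2) ⊕ V) = p ^ e + e + 2 ∧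
    Nat.card (genCode (e + 2) (bentMatrix f b)) = p ^ (e + 2) ∧
    (s = 1 → IsMinDist (genCode (e + 2) (bentMatrix f b))
      (p ^ e - p ^ (e - 1) - (p - 1) * p ^ (e / 2 - 1) + 2)) ∧
    (s = -1 → IsMinDist (genCode (e + 2) (bentMatrix f b))
      (p ^ e - p ^ (e - 1) - p ^ (e / 2 - 1) + 1)) ∧
    Nat.card (dualCode (genCode (e + 2) (bentMatrix f b))) = p ^ (p ^ e) ∧
    IsMinDist (dualCode (genCode (e + 2) (bentMatrix f b))) 3 := by
  have hp : 0 < p := (Fact.out : p.Prime).pos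
  have hV : Fintype.card V = p ^ e := by
    rw [Module.card_eq_pow_finrank (K := ZMod p), ZMod.card, ← Subspace.dual_finrank_eq,
      finrank_eq_card_basis b, Fintype.card_fin]
  have hpow : p ^ e = p * p ^ (e - 1) := (mul_pow_sub_one (by lia) p).symm
  have hamp : (p : ℤ) ^ (e / 2) = p * (p ^ (e / 2 - 1) : ℕ) := by
    rw [Nat.cast_pow, mul_pow_sub_one (by lia)]
  have hdual (hs : Odd s) : fdual 0 = 0 :=
    (hbent.dual_zero hodd (hs.mul (by exact_mod_cast hodd.pow)) hf).trans hf0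
  refine ⟨?_, ?_, ?_, ?_, ?_, ?_⟩
  · rw [Fintype.card_sum, Fintype.card_fin, hV]
    lia
  · rw [card_genCode, Nat.card_zmod]
  · rintro rfl
    rw [one_mul, hamp] at hbent
    rw [hpow]
    exact hbent.isMinDist_of_pos b (by positivity) (hV.trans hpow) (hdual odd_one)
  · rintro rfl
    rw [hamp, neg_one_mul, ← mul_neg] at hbent
    rw [hpow]
    exact hbent.isMinDist_of_neg b (hV.trans hpow) (hdual odd_one.neg)
  · rw [card_dualCode_genCode, Nat.card_zmod, hV]
  · exact isMinDist_dualCode_bentMatrix (fun x y => eq_of_forall_dual_basis_apply_eq b) hf0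

theorem stmt17 (p e : ℕ) [Fact p.Prime] (hodd : Odd p) (he : 2 ≤ e) (heven : Even e)
    (Fq : Type) [Field Fq] [Fintype Fq] [Algebra (ZMod p) Fq]
    (hcq : Fintype.card Fq = p ^ e)
    (f : Fq → ZMod p) (ε : ℤ) (fstar : Fq → ZMod p) (hRF : IsRF p e Fq f ε fstar)
    -- `β` is a primitive element of `F_q`
    (β : Fq) (hβ : ∀ y : Fq, y ≠ 0 → ∃ k : ℕ, β ^ k = y)
    -- the matrix `G₂`
    (G2 : Fin (e + 2) → Fq → ZMod p)
    (hG2 : ∀ k d, G2 k d =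
      if (k : ℕ) = 0 then 1
      else if (k : ℕ) = 1 then f d + 1
      else Algebra.trace (ZMod p) Fq (β ^ ((k : ℕ) - 2) * d))
    (C' : Set ((Fin (e + 2) ⊕ Fq) → ZMod p)) (hC' : C' = genCode (e + 2) G2) :
    -- length `p^e + e + 2`
    Fintype.card (Fin (e + 2) ⊕ Fq) = p ^ e + e + 2 ∧
    -- dimension `e + 2`
    Nat.card C' = p ^ (e + 2) ∧
    -- minimum distance
    (ε * qchar (ZMod p) (-1) ^ (e / 2) = 1 →
      IsMinDist C' (p ^ e - p ^ (e - 1) - (p - 1) * p ^ (e / 2 - 1) + 2)) ∧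
    (ε * qchar (ZMod p) (-1) ^ (e / 2) = -1 →
      IsMinDist C' (p ^ e - p ^ (e - 1) - p ^ (e / 2 - 1) + 1)) ∧
    -- the dual has dimension `p^e` and minimum distance `3`
    Nat.card (dualCode C') = p ^ (p ^ e) ∧
    IsMinDist (dualCode C') 3 := by
  subst hC'
  have hfin : finrank (ZMod p) Fq = e := by
    have hcard := Module.card_eq_pow_finrank (K := ZMod p) (V := Fq)
    rw [hcq, ZMod.card] at hcard
    exact (Nat.pow_right_injective (Fact.out : p.Prime).two_le hcard).symm
  obtain ⟨b, hb⟩ := exists_basis_dual_trace_pow hfin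
    (adjoin_eq_top_of_forall_exists_pow_eq (ZMod p) hβ)
  have hG : G2 = bentMatrix f b := by
    ext k x
    rw [hG2]
    refine Fin.cases (by simp [bentMatrix]) (fun k => Fin.cases (by simp [bentMatrix]) ?_ k) k
    exact fun i => by simp [bentMatrix, hb]
  rw [hG]
  exact stmt17_general hodd he b hRF.map_zero hRF.even (hRF.isWeaklyRegularBent hodd heven)
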